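/- For every integer h ≥ 0, the generating function D_h(1,1;q,t) of Dyck paths of height at most h, weighted by q^{m(π)} t^{n(π)}, satisfies D_h(1,1;q,t) · Σ_{m≥0} (-t)^m q^{m(m-1)} [h+1-m choose m]_q = Σ_{m≥0} (-t)^m q^{m²} [h-m choose m]_q, where both sums are finite since the q-binomial coefficients vanish for large m. -/

import Mathlib

/-!
A first-step decomposition proves the identity. Fix `h` and let `F_k` be the generating function,
in the number of up-steps, of the paths from height `k` down to height `0` inside the strip
`0 ≤ y ≤ h`. Putting `A_0 = 1` and `A_{k+1} = F_k`, removal of the first step gives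
`A_{k+1} = A_k + q^k t A_{k+2}` for `k ≤ h`, with `A_{h+2} = 0` (`pathSeries_rec`,
`pathSeries_top`).

The series `V_k = Σ_m (-t)^m q^{m(m-1)+km} [h+1-k-m choose m]_q` satisfy the same recurrence, which
coefficientwise is the `q`-Pascal rule (`qbinom_pascal`, `V_rec`), with `V_{h+2} = 0` and
`V_{h+1} = 1`. Downward induction on `k` therefore gives `A_k = A_{h+1} V_k`. Since `A_0 = 1`, it
follows that `A_1 V_0 = A_{h+1} V_1 V_0 = A_0 V_1 = V_1`, and this is the claim: `A_1` is the
generating function of Dyck paths of height at most `h`, `V_0` is the denominator and `V_1` the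
numerator.
-/

/-!
Statement 1: For every `h ≥ 0`,
`D_h(1,1;q,t) · Σ_{m≥0} (-t)^m q^{m(m-1)} [h+1-m choose m]_q
  = Σ_{m≥0} (-t)^m q^{m²} [h-m choose m]_q`.

We work over the field `K` of rational functions in the indeterminate `q`, with formal
power series in `t`.
-/

open Finset PowerSeries

noncomputable section

/-- The field of rational functions in the variable `q`. -/
abbrev K : Type := FractionRing (Polynomial ℚ)

/-- The indeterminate `q`. -/
def qv : K := algebraMap (Polynomial ℚ) K Polynomial.X

/-- A path is encoded as a list of steps, `true` = step `(1,1)`, `false` = step `(1,-1)`.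
`hgt s i` is the height of the vertex reached after the first `i` steps. -/
def hgt (s : List Bool) (i : ℕ) : ℕ := (s.take i).count true - (s.take i).count false

/-- A Dyck path: it ends on the line `y = 0` and never goes below it. -/
def IsDyck (s : List Bool) : Prop :=
  s.count true = s.count false ∧ ∀ i, (s.take i).count false ≤ (s.take i).count true

/-- The area statistic `m(π)`: the sum of the starting heights of all up-steps. -/
def area (s : List Bool) : ℕ :=
  ∑ i ∈ Finset.range s.length, if s.getD i false = true then hgt s i else 0

/-- The set of Dyck paths of semilength `n` and height at most `h`. -/
def dyckSet (h n : ℕ) : Set (List Bool) :=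
  {s | s.length = 2 * n ∧ IsDyck s ∧ ∀ i, hgt s i ≤ h}

/-- `D_h(1,1;q,t)`: the generating function of height-`≤ h` Dyck paths weighted by
`q^{m(π)} t^{n(π)}`. -/
def Dgf (q : K) (h : ℕ) : PowerSeries K :=
  PowerSeries.mk fun n => ∑ᶠ s ∈ dyckSet h n, q ^ area s

/-- The q-Pochhammer symbol `(q;q)_n = ∏_{i=0}^{n-1} (1 - q·q^i)`. -/
def qPochQQ (q : K) (n : ℕ) : K := ∏ i ∈ Finset.range n, (1 - q * q ^ i)

/-- The q-binomial coefficient, `0` whenever `k < 0` or `k > n`. -/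
def qbinom (q : K) (n k : ℤ) : K :=
  if 0 ≤ k ∧ k ≤ n then
    qPochQQ q n.toNat / (qPochQQ q k.toNat * qPochQQ q (n - k).toNat)
  else 0

/-! ### Paths in a strip -/

/-- The paths with `L` steps from height `k` to height `0` that stay between `y = 0` and `y = h`,
built by choosing the first step. The set is empty when `k > h`. -/
def paths (h : ℕ) : ℕ → ℕ → Finset (List Bool)
  | 0, k => if k = 0 then {[]} else ∅
  | L + 1, 0 => (paths h L 1).image (List.cons true)
  | L + 1, k + 1 =>
    if k + 1 ≤ h then
      (paths h L (k + 2)).image (List.cons true) ∪ (paths h L k).image (List.cons false)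
    else ∅

/-- The sum of the starting heights of the up-steps of a path that starts at height `k`. The
subtraction is truncated, as in `hgt`, so this is the intended sum only for paths that never go
below `y = 0`. -/
def areaFrom (k : ℕ) (s : List Bool) : ℕ :=
  ∑ i ∈ Finset.range s.length,
    if s.getD i false = true then k + (s.take i).count true - (s.take i).count false else 0

lemma areaFrom_zero (s : List Bool) : areaFrom 0 s = area s := by
  simp [areaFrom, area, hgt]

lemma areaFrom_cons_true (k : ℕ) (s : List Bool) :
    areaFrom k (true :: s) = k + areaFrom (k + 1) s := by
  simp only [areaFrom, List.length_cons, Finset.sum_range_succ']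
  simp [add_comm, add_left_comm]

lemma areaFrom_cons_false (k : ℕ) (s : List Bool) :
    areaFrom (k + 1) (false :: s) = areaFrom k s := by
  simp only [areaFrom, List.length_cons, Finset.sum_range_succ']
  simp only [List.getD_cons_succ, List.take_succ_cons, List.getD_cons_zero, Bool.false_eq_true,
    if_false, add_zero]
  refine Finset.sum_congr rfl fun i _ => ?_
  simp only [List.count_cons]
  congr 1
  simp
  omega

/-- The path `s`, started at height `k`, ends on `y = 0` and stays between `y = 0` and `y = h`.
The inequalities between heights are written without subtraction. -/
def InStrip (h k : ℕ) (s : List Bool) : Prop :=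
  k + s.count true = s.count false ∧
    ∀ i, (s.take i).count false ≤ k + (s.take i).count true ∧
      k + (s.take i).count true ≤ h + (s.take i).count false

lemma inStrip_nil (h k : ℕ) : InStrip h k [] ↔ k = 0 := by
  simp only [InStrip, List.take_nil, List.count_nil]
  constructor
  · rintro ⟨h1, -⟩; omega
  · rintro rfl; simp

lemma inStrip_cons_true (h k : ℕ) (s : List Bool) :
    InStrip h k (true :: s) ↔ k ≤ h ∧ InStrip h (k + 1) s := by
  unfold InStrip
  constructor
  · rintro ⟨h1, h2⟩
    simp only [List.count_cons] at h1
    refine ⟨by simpa using (h2 0).2, by simp at h1; omega, fun i => ?_⟩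
    have := h2 (i + 1)
    simp [List.take_succ_cons] at this
    omega
  · rintro ⟨h0, h1, h2⟩
    refine ⟨by simp; omega, fun i => ?_⟩
    cases i with
    | zero => simpa using h0
    | succ i =>
      have := h2 i
      simp [List.take_succ_cons]
      omega

lemma inStrip_cons_false (h k : ℕ) (s : List Bool) :
    InStrip h k (false :: s) ↔ k ≤ h ∧ 1 ≤ k ∧ InStrip h (k - 1) s := by
  unfold InStrip
  constructor
  · rintro ⟨h1, h2⟩
    have hk : 1 ≤ k := by simpa using (h2 1).1
    refine ⟨by simpa using (h2 0).2, hk, by simp at h1; omega, fun i => ?_⟩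
    have := h2 (i + 1)
    simp [List.take_succ_cons] at this
    omega
  · rintro ⟨h0, hk, h1, h2⟩
    refine ⟨by simp; omega, fun i => ?_⟩
    cases i with
    | zero => simpa using h0
    | succ i =>
      have := h2 i
      simp [List.take_succ_cons]
      omega

lemma InStrip.le {h k : ℕ} {s : List Bool} (hs : InStrip h k s) : k ≤ h := by
  simpa using (hs.2 0).2

lemma mem_paths (h L k : ℕ) (s : List Bool) :
    s ∈ paths h L k ↔ s.length = L ∧ InStrip h k s := by
  induction L generalizing k s with
  | zero =>
    rw [List.length_eq_zero_iff]
    by_cases hk : k = 0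
    · simp only [paths, hk, if_true, Finset.mem_singleton]
      constructor
      · rintro rfl; exact ⟨rfl, (inStrip_nil _ _).2 rfl⟩
      · exact fun h => h.1
    · simp only [paths, hk, if_false, Finset.notMem_empty, false_iff]
      rintro ⟨rfl, h2⟩
      exact hk ((inStrip_nil _ _).1 h2)
  | succ L ih =>
    cases s with
    | nil =>
      cases k with
      | zero => simp [paths]
      | succ k => by_cases hk : k + 1 ≤ h <;> simp [paths, hk]
    | cons b s =>
      cases k with
      | zero =>
        cases b <;> simp [paths, ih, inStrip_cons_true, inStrip_cons_false]
      | succ k =>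
        by_cases hk : k + 1 ≤ h
        · cases b <;> simp [paths, ih, inStrip_cons_true, inStrip_cons_false, hk]
        · simp only [paths, hk, if_false, Finset.notMem_empty, false_iff]
          exact fun h => hk h.2.le

lemma coe_paths (h n : ℕ) : (paths h (2 * n) 0 : Set (List Bool)) = dyckSet h n := by
  ext s
  simp only [Finset.mem_coe, mem_paths, dyckSet, IsDyck, hgt, InStrip, Set.mem_ofPred_eq, zero_add,
    forall_and, and_assoc, tsub_le_iff_right]

/-! ### The path generating functions -/

/-- The weighted count of the paths with `L` steps from height `k` to height `0` in the strip. -/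
def pathSum (q : K) (h L k : ℕ) : K := ∑ s ∈ paths h L k, q ^ areaFrom k s

lemma pathSum_succ_zero (q : K) (h L : ℕ) : pathSum q h (L + 1) 0 = pathSum q h L 1 := by
  unfold pathSum
  rw [paths, Finset.sum_image (by simp)]
  simp [areaFrom_cons_true]

lemma pathSum_succ_succ (q : K) {h L k : ℕ} (hk : k + 1 ≤ h) :
    pathSum q h (L + 1) (k + 1) = q ^ (k + 1) * pathSum q h L (k + 2) + pathSum q h L k := by
  unfold pathSum
  rw [paths, if_pos hk, Finset.sum_union, Finset.sum_image (by simp), Finset.sum_image (by simp)]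
  · simp [areaFrom_cons_true, areaFrom_cons_false, pow_add, Finset.mul_sum]
  · rw [Finset.disjoint_left]
    simp

lemma pathSum_of_height_lt (q : K) {h L k : ℕ} (hk : h < k) : pathSum q h L k = 0 := by
  refine Finset.sum_eq_zero fun s hs => ?_
  have := ((mem_paths _ _ _ _).1 hs).2.le
  omega

/-- A path from height `k` to height `0` has at least `k` steps. -/
lemma pathSum_of_length_lt (q : K) {h L k : ℕ} (hk : L < k) : pathSum q h L k = 0 := by
  refine Finset.sum_eq_zero fun s hs => ?_
  obtain ⟨h1, h2, -⟩ := (mem_paths _ _ _ _).1 hs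
  have := List.count_le_length (a := false) (l := s)
  omega

/-- `A_0 = 1`, and `A_{k+1}` is the generating function of the paths from height `k` to height `0`
in the strip, by number of up-steps: a path with `n` up-steps has `n + k` down-steps. -/
def pathSeries (q : K) (h : ℕ) : ℕ → PowerSeries K
  | 0 => 1
  | k + 1 => PowerSeries.mk fun n => pathSum q h (2 * n + k) k

lemma pathSeries_one (q : K) (h : ℕ) : pathSeries q h 1 = Dgf q h := by
  ext n
  simp only [pathSeries, Dgf, coeff_mk, ← coe_paths, finsum_mem_coe_finset, pathSum, areaFrom_zero,
    add_zero]

lemma pathSeries_top (q : K) (h : ℕ) : pathSeries q h (h + 2) = 0 := by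
  ext n
  simp [pathSeries, pathSum_of_height_lt]

/-- Removal of the first step of a path starting at height `k`. -/
lemma pathSeries_rec (q : K) {h k : ℕ} (hk : k ≤ h) :
    pathSeries q h (k + 1) = pathSeries q h k + C (q ^ k) * (X * pathSeries q h (k + 2)) := by
  ext n
  rw [map_add, coeff_C_mul]
  cases k with
  | zero =>
    cases n with
    | zero => simp [pathSeries, pathSum, paths, areaFrom]
    | succ n =>
      rw [coeff_succ_X_mul]
      simp [pathSeries, coeff_one, mul_add, pathSum_succ_zero]
  | succ k =>
    cases n with
    | zero =>
      -- There are no up-steps, so the path goes straight down.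
      simp only [pathSeries, coeff_mk, coeff_zero_X_mul, mul_zero, add_zero, zero_add]
      rw [pathSum_succ_succ q hk, pathSum_of_length_lt q (by omega : k < k + 2)]
      ring
    | succ n =>
      rw [coeff_succ_X_mul]
      simp only [pathSeries, coeff_mk]
      rw [← add_assoc, pathSum_succ_succ q hk, add_comm]
      congr 3
      ring

/-! ### The `q`-Pascal rule -/

lemma one_sub_qv_pow_ne_zero (n : ℕ) : (1 : K) - qv * qv ^ n ≠ 0 := by
  rw [← pow_succ', sub_ne_zero]
  intro h
  have h' : (1 : Polynomial ℚ) = Polynomial.X ^ (n + 1) := by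
    apply IsFractionRing.injective (Polynomial ℚ) K
    simpa [qv] using h
  simpa using congrArg (Polynomial.eval 0) h'

lemma qPochQQ_ne_zero (n : ℕ) : qPochQQ qv n ≠ 0 :=
  Finset.prod_ne_zero_iff.2 fun i _ => one_sub_qv_pow_ne_zero i

lemma qPochQQ_succ (q : K) (n : ℕ) : qPochQQ q (n + 1) = qPochQQ q n * (1 - q * q ^ n) :=
  Finset.prod_range_succ _ _

lemma qbinom_of_lt (q : K) {n k : ℤ} (h : n < k) : qbinom q n k = 0 :=
  if_neg (by omega)

lemma qbinom_add (q : K) (j k : ℕ) :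
    qbinom q ((k : ℤ) + j) k = qPochQQ q (k + j) / (qPochQQ q k * qPochQQ q j) := by
  have h1 : ((k : ℤ) + j).toNat = k + j := by omega
  have h2 : ((k : ℤ) + j - k).toNat = j := by omega
  rw [qbinom, if_pos (by omega), h1, h2, Int.toNat_natCast]

lemma qbinom_self (k : ℕ) : qbinom qv k k = 1 := by
  have := qbinom_add qv 0 k
  have h := qPochQQ_ne_zero k
  simp only [Nat.cast_zero, add_zero] at this
  rw [this, show qPochQQ qv 0 = 1 from Finset.prod_range_zero _]
  field_simp

lemma qbinom_zero_right {n : ℤ} (hn : 0 ≤ n) : qbinom qv n 0 = 1 := by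
  lift n to ℕ using hn
  have := qbinom_add qv n 0
  have h := qPochQQ_ne_zero n
  simp only [Nat.cast_zero, zero_add] at this
  rw [this, show qPochQQ qv 0 = 1 from Finset.prod_range_zero _]
  field_simp

lemma qbinom_pascal (N : ℤ) (m : ℕ) :
    qbinom qv (N + 1) ((m : ℤ) + 1) =
      qv ^ (m + 1) * qbinom qv N ((m : ℤ) + 1) + qbinom qv N m := by
  rcases lt_trichotomy N m with h | h | h
  · rw [qbinom_of_lt _ (by omega), qbinom_of_lt _ (by omega), qbinom_of_lt _ h]
    ring
  · subst h
    have := qbinom_self (m + 1)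
    push_cast at this
    rw [this, qbinom_of_lt _ (by omega), qbinom_self]
    ring
  · obtain ⟨j, rfl⟩ : ∃ j : ℕ, N = (m : ℤ) + 1 + j := ⟨(N - m - 1).toNat, by omega⟩
    have e1 := qbinom_add qv (j + 1) (m + 1)
    have e2 := qbinom_add qv j (m + 1)
    have e3 := qbinom_add qv (j + 1) m
    push_cast at e1 e2 e3
    rw [show (m : ℤ) + 1 + j + 1 = m + 1 + (j + 1) by ring, e1, e2,
      show (m : ℤ) + 1 + j = m + (j + 1) by ring, e3,
      show m + 1 + (j + 1) = (m + 1 + j) + 1 by ring, show m + (j + 1) = m + 1 + j by ring,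
      qPochQQ_succ qv (m + 1 + j), qPochQQ_succ qv m, qPochQQ_succ qv j]
    have := qPochQQ_ne_zero m
    have := qPochQQ_ne_zero j
    have := one_sub_qv_pow_ne_zero m
    have := one_sub_qv_pow_ne_zero j
    field_simp
    ring

/-! ### The numerator and denominator series -/

/-- `V_k = Σ_m (-t)^m q^{m(m-1)+km} [h+1-k-m choose m]_q`. Here `V_0` is the denominator and `V_1`
the numerator of the generating function. -/
def V (h k : ℕ) : PowerSeries K :=
  PowerSeries.mk fun m : ℕ => (-1 : K) ^ m * qv ^ (m * (m - 1) + k * m) *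
    qbinom qv ((h : ℤ) + 1 - k - m) (m : ℤ)

lemma V_rec {h k : ℕ} (hk : k ≤ h) : V h (k + 1) = V h k + C (qv ^ k) * (X * V h (k + 2)) := by
  ext m
  rw [map_add, coeff_C_mul]
  cases m with
  | zero =>
    simp only [V, coeff_mk, coeff_zero_X_mul, Nat.cast_zero, mul_zero, add_zero]
    rw [qbinom_zero_right (by push_cast; omega), qbinom_zero_right (by omega)]
  | succ m =>
    rw [coeff_succ_X_mul]
    simp only [V, coeff_mk]
    have hp := qbinom_pascal ((h : ℤ) - k - m - 1) m
    have e : m * (m - 1) + m = m * m := by cases m <;> simp; ring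
    push_cast
    rw [show (h : ℤ) + 1 - k - (m + 1) = h - k - m - 1 + 1 by ring, hp,
      show (h : ℤ) + 1 - (k + 1) - (m + 1) = h - k - m - 1 by ring,
      show (h : ℤ) + 1 - (k + 2) - m = h - k - m - 1 by ring,
      show m * (m - 1) + (k + 2) * m = m * m + m + k * m by rw [← e]; ring]
    ring

lemma V_top (h : ℕ) : V h (h + 2) = 0 := by
  ext m
  simp only [V, coeff_mk]
  rw [qbinom_of_lt _ (by push_cast; omega)]
  simp

lemma V_height_succ (h : ℕ) : V h (h + 1) = 1 := by
  ext m
  simp only [V, coeff_mk, coeff_one]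
  rcases Nat.eq_zero_or_pos m with rfl | hm
  · rw [Nat.cast_zero, qbinom_zero_right (by push_cast; omega)]
    simp
  · rw [qbinom_of_lt _ (by push_cast; omega), if_neg hm.ne']
    simp

/-- Two solutions of the recurrence that both vanish at index `h + 2` are proportional; `V h` is
the one normalised to be `1` at index `h + 1`. -/
lemma pathSeries_eq_mul_V (h j k : ℕ) (hjk : j + k = h + 1) :
    pathSeries qv h k = pathSeries qv h (h + 1) * V h k ∧
      pathSeries qv h (k + 1) = pathSeries qv h (h + 1) * V h (k + 1) := by
  induction j generalizing k with
  | zero =>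
    obtain rfl : k = h + 1 := by omega
    exact ⟨by rw [V_height_succ, mul_one], by rw [pathSeries_top, V_top, mul_zero]⟩
  | succ j ih =>
    obtain ⟨h1, h2⟩ := ih (k + 1) (by omega)
    refine ⟨?_, h1⟩
    have hA := pathSeries_rec qv (show k ≤ h by omega)
    have hV := V_rec (show k ≤ h by omega)
    linear_combination h1 - hA + pathSeries qv h (h + 1) * hV - C (qv ^ k) * X * h2

/-- For every `h ≥ 0`,
`D_h(1,1;q,t) · Σ_{m≥0} (-t)^m q^{m(m-1)} [h+1-m choose m]_q
  = Σ_{m≥0} (-t)^m q^{m²} [h-m choose m]_q`. -/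
theorem dyck_height_generating_function_ab_one (h : ℕ) :
    Dgf qv h *
      PowerSeries.mk (fun m : ℕ => (-1 : K) ^ m * qv ^ (m * (m - 1)) *
        qbinom qv ((h : ℤ) + 1 - m) (m : ℤ))
    = PowerSeries.mk (fun m : ℕ => (-1 : K) ^ m * qv ^ (m * m) *
        qbinom qv ((h : ℤ) - m) (m : ℤ)) := by
  have h0 : V h 0 = PowerSeries.mk (fun m : ℕ => (-1 : K) ^ m * qv ^ (m * (m - 1)) *
      qbinom qv ((h : ℤ) + 1 - m) (m : ℤ)) := by
    simp [V]
  have h1 : V h 1 = PowerSeries.mk (fun m : ℕ => (-1 : K) ^ m * qv ^ (m * m) *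
      qbinom qv ((h : ℤ) - m) (m : ℤ)) := by
    ext m
    have e : m * (m - 1) + 1 * m = m * m := by cases m <;> simp; ring
    simp only [V, coeff_mk, e, Nat.cast_one, add_sub_cancel_right]
  rw [← h0, ← h1, ← pathSeries_one]
  obtain ⟨e0, e1⟩ := pathSeries_eq_mul_V h (h + 1) 0 (by omega)
  rw [show pathSeries qv h 0 = 1 from rfl] at e0
  rw [zero_add] at e1
  linear_combination V h 0 * e1 - V h 1 * e0

end
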